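/- arXiv:2502.11033 — 3 statements merged into one kernel-verified Lean document; each statement's English description precedes it below -/
import Mathlib

section
/- Local smoothness of the value function: let π : S → Δ(A) be any policy with ε := min_{s,a} π_{s,a} > 0. Then for any policy π̃ : S → Δ(A): |V(π̃) − V(π) − ⟨∇V(π), π̃ − π⟩| ≤ min{ (H³/√ε) ‖π̃ − π‖²_{L²(μ^π),1}, (A H³/√ε) ‖π̃ − π‖²_{L²(μ^π),2} }. -/
open scoped BigOperators Classical

noncomputable section

/-- A discounted MDP with finite state space `S` and finite action set `A`.
`r` is interpreted as a cost in `[0,1]`. -/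
structure MDP (S A : Type) [Fintype S] [Fintype A] where
  P : S → A → S → ℝ
  P_nonneg : ∀ s a s', 0 ≤ P s a s'
  P_sum_one : ∀ s a, ∑ s', P s a s' = 1
  r : S → A → ℝ
  r_nonneg : ∀ s a, 0 ≤ r s a
  r_le_one : ∀ s a, r s a ≤ 1
  gamma : ℝ
  gamma_pos : 0 < gamma
  gamma_lt_one : gamma < 1
  rho0 : S → ℝ
  rho0_nonneg : ∀ s, 0 ≤ rho0 s
  rho0_sum_one : ∑ s, rho0 s = 1

variable {S A : Type} [Fintype S] [Fintype A]

/-- `π` is a policy: a probability distribution over actions at every state. -/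
def IsPolicy (π : S → A → ℝ) : Prop :=
  (∀ s a, 0 ≤ π s a) ∧ ∀ s, ∑ a, π s a = 1

namespace MDP

/-- Effective horizon `H = 1/(1-γ)`. -/
def horizon (M : MDP S A) : ℝ := 1 / (1 - M.gamma)

/-- One-step evolution of a state distribution under policy `π`. -/
def stepDist (M : MDP S A) (π : S → A → ℝ) (d : S → ℝ) : S → ℝ :=
  fun s' => ∑ s, ∑ a, d s * π s a * M.P s a s'

/-- State distribution at time `t` under `π` with start distribution `ρ`. -/
def distAt (M : MDP S A) (π : S → A → ℝ) (ρ : S → ℝ) (t : ℕ) : S → ℝ :=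
  (M.stepDist π)^[t] ρ

/-- Expected one-step cost under state distribution `d` and policy `π`. -/
def expCost (M : MDP S A) (π : S → A → ℝ) (d : S → ℝ) : ℝ :=
  ∑ s, ∑ a, d s * π s a * M.r s a

/-- Discounted value `V_ρ(π) = Σ_t γ^t E[r(s_t,a_t)]` with start-state distribution `ρ`. -/
def valueFrom (M : MDP S A) (π : S → A → ℝ) (ρ : S → ℝ) : ℝ :=
  ∑' t : ℕ, M.gamma ^ t * M.expCost π (M.distAt π ρ t)

/-- Value starting from state `s`. -/
def valueAt (M : MDP S A) (π : S → A → ℝ) (s : S) : ℝ :=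
  M.valueFrom π (fun s' => if s' = s then 1 else 0)

/-- Value from the initial state distribution `ρ0`. -/
def value (M : MDP S A) (π : S → A → ℝ) : ℝ := M.valueFrom π M.rho0

/-- Action-value (Q) function. -/
def Qfun (M : MDP S A) (π : S → A → ℝ) (s : S) (a : A) : ℝ :=
  M.r s a + M.gamma * ∑ s', M.P s a s' * M.valueAt π s'

/-- Discounted state-occupancy measure with start distribution `ρ`. -/
def occFrom (M : MDP S A) (π : S → A → ℝ) (ρ : S → ℝ) (s : S) : ℝ :=
  (1 - M.gamma) * ∑' t : ℕ, M.gamma ^ t * M.distAt π ρ t s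

/-- Discounted state-occupancy measure from the initial distribution. -/
def occ (M : MDP S A) (π : S → A → ℝ) : S → ℝ := M.occFrom π M.rho0

/-- Policy gradient in the direct parametrization:
`(∇V(π))_{s,a} = H μ^π(s) Q^π_{s,a}` (policy gradient theorem). -/
def gradV (M : MDP S A) (π : S → A → ℝ) : S → A → ℝ :=
  fun s a => M.horizon * M.occ π s * M.Qfun π s a

end MDP

/-- Inner product on `ℝ^A`. -/
def innerA (u v : A → ℝ) : ℝ := ∑ a, u a * v a

/-- Inner product on `ℝ^{S×A}`. -/
def innerSA (u v : S → A → ℝ) : ℝ := ∑ s, ∑ a, u s a * v s a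

/-- `PC` satisfies `(C, eps)`-variational gradient dominance w.r.t. `M`. -/
def IsVGD (M : MDP S A) (PC : Set (S → A → ℝ)) (C eps : ℝ) : Prop :=
  ∀ π ∈ PC, M.value π - sInf (M.value '' PC) ≤
    C * sSup ((fun π' => innerSA (M.gradV π) (fun s a => π s a - π' s a)) '' PC) + eps

/-- The ε-greedy exploratory class `Π^ε = {(1-ε)π + ε·u : π ∈ Π}`, `u` uniform. -/
def greedyClass (PC : Set (S → A → ℝ)) (ε : ℝ) : Set (S → A → ℝ) :=
  (fun π => fun s a => (1 - ε) * π s a + ε / (Fintype.card A : ℝ)) '' PC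

/-- Weighted norm `‖u‖_{L²(μ),1} = √(E_{s∼μ} ‖u_s‖₁²)`. -/
def wnorm1 (μ : S → ℝ) (u : S → A → ℝ) : ℝ :=
  Real.sqrt (∑ s, μ s * (∑ a, |u s a|) ^ 2)

/-- Weighted norm `‖u‖_{L²(μ),2} = √(E_{s∼μ} ‖u_s‖₂²)`. -/
def wnorm2 (μ : S → ℝ) (u : S → A → ℝ) : ℝ :=
  Real.sqrt (∑ s, μ s * ∑ a, (u s a) ^ 2)

/-- `N` is a norm on `ℝ^A`. -/
def IsNormA (N : (A → ℝ) → ℝ) : Prop :=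
  (∀ x, 0 ≤ N x) ∧ (∀ x, N x = 0 ↔ x = 0) ∧
    (∀ (c : ℝ) (x : A → ℝ), N (c • x) = |c| * N x) ∧ ∀ x y, N (x + y) ≤ N x + N y

/-- Dual norm of a norm `N` on `ℝ^A`. -/
def dualNormA (N : (A → ℝ) → ℝ) (z : A → ℝ) : ℝ :=
  sSup ((fun u => innerA z u) '' {u | N u ≤ 1})

/-- Weighted norm `‖u‖_{L²(μ),∘} = √(E_{s∼μ} ‖u_s‖∘²)` for an action-space norm `N`. -/
def wnormN (μ : S → ℝ) (N : (A → ℝ) → ℝ) (u : S → A → ℝ) : ℝ :=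
  Real.sqrt (∑ s, μ s * (N (u s)) ^ 2)

/-- Bregman divergence on `ℝ^A` of `R` whose gradient is `gR`. -/
def bregA (R : (A → ℝ) → ℝ) (gR : (A → ℝ) → A → ℝ) (u v : A → ℝ) : ℝ :=
  R u - R v - innerA (gR v) (u - v)

/-- The probability simplex `Δ(B)`. -/
def simplexA (B : Type) [Fintype B] : Set (B → ℝ) :=
  {p | (∀ b, 0 ≤ p b) ∧ ∑ b, p b = 1}

/-!
The difference `h = V^π̃ - V^π` solves `h - γ P_π h = g`, where `g s = ⟨π̃_s - π_s, Q^π̃_s⟩`, and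
the linearisation error is exactly `H γ E_{s∼μ} ⟨π̃_s - π_s, (P h)_s⟩` with `μ = μ^π`. Since
`γ μ P_π ≤ μ`, the operator `√γ P_π` is a contraction of `L²(μ)`, so that
`‖h‖ ≤ ‖g‖ / (1 - √γ) ≤ 2 H ‖g‖`; and `|g s| ≤ (H / 2) ‖π̃_s - π_s‖₁` because `Q^π̃` takes values
in `[0, H]` and `π̃_s - π_s` has mass zero. Finally, `π ≥ ε` bounds the supremum over actions of
`(P h)_s` by its `L²(π_s)` norm divided by `√ε`, and the same excessiveness of `μ` bounds the
`L²(μ ⊗ π)` norm of `P h` by `‖h‖ / √γ`.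
-/

open scoped Matrix

section WeightedL2

variable {ι : Type*} [Fintype ι] {w f g : ι → ℝ}

/-- The `L²(w)` seminorm `√(∑ i, w i * f i ^ 2)` of a function on a finite type, with respect to
weights `w` meant to be nonnegative; the weights need not have total mass one. -/
def weightedL2Norm (w f : ι → ℝ) : ℝ :=
  √(∑ i, w i * f i ^ 2)

theorem weightedL2Norm_nonneg : 0 ≤ weightedL2Norm w f :=
  Real.sqrt_nonneg _

theorem sq_weightedL2Norm (hw : 0 ≤ w) : weightedL2Norm w f ^ 2 = ∑ i, w i * f i ^ 2 :=
  Real.sq_sqrt (Finset.sum_nonneg fun i _ => mul_nonneg (hw i) (sq_nonneg _))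

theorem weightedL2Norm_mono (hw : 0 ≤ w) (hfg : ∀ i, |f i| ≤ g i) :
    weightedL2Norm w f ≤ weightedL2Norm w g :=
  Real.sqrt_le_sqrt <| Finset.sum_le_sum fun i _ =>
    mul_le_mul_of_nonneg_left (sq_le_sq.2 ((hfg i).trans (le_abs_self _))) (hw i)

theorem weightedL2Norm_smul (c : ℝ) : weightedL2Norm w (c • f) = |c| * weightedL2Norm w f := by
  simp only [weightedL2Norm, Pi.smul_apply, smul_eq_mul, mul_pow, mul_left_comm _ (c ^ 2),
    ← Finset.mul_sum]
  rw [Real.sqrt_mul (sq_nonneg c), Real.sqrt_sq_eq_abs]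

theorem sum_mul_mul_le_weightedL2Norm_mul (hw : 0 ≤ w) :
    ∑ i, w i * (f i * g i) ≤ weightedL2Norm w f * weightedL2Norm w g := by
  have split : ∀ x y i, w i * (x * y) = (√(w i) * x) * (√(w i) * y) := fun x y i => by
    rw [mul_mul_mul_comm, Real.mul_self_sqrt (hw i)]
  simp only [weightedL2Norm, sq, split]
  simpa only [← sq] using Real.sum_mul_le_sqrt_mul_sqrt Finset.univ
    (fun i => √(w i) * f i) (fun i => √(w i) * g i)

theorem weightedL2Norm_add_le (hw : 0 ≤ w) :
    weightedL2Norm w (f + g) ≤ weightedL2Norm w f + weightedL2Norm w g := by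
  refine le_of_sq_le_sq ?_ (add_nonneg weightedL2Norm_nonneg weightedL2Norm_nonneg)
  calc weightedL2Norm w (f + g) ^ 2
      = weightedL2Norm w f ^ 2 + 2 * ∑ i, w i * (f i * g i) + weightedL2Norm w g ^ 2 := by
        simp only [sq_weightedL2Norm hw, Pi.add_apply, Finset.mul_sum, ← Finset.sum_add_distrib]
        exact Finset.sum_congr rfl fun i _ => by ring
    _ ≤ (weightedL2Norm w f + weightedL2Norm w g) ^ 2 := by
        linarith [sum_mul_mul_le_weightedL2Norm_mul (f := f) (g := g) hw]

theorem abs_dotProduct_le_weightedL2Norm (hw : w ∈ stdSimplex ℝ ι) :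
    |w ⬝ᵥ f| ≤ weightedL2Norm w f :=
  Real.abs_le_sqrt <| Real.pow_arith_mean_le_arith_mean_pow_of_even _ w f (fun i _ => hw.1 i) hw.2
    even_two

theorem abs_le_weightedL2Norm_div_sqrt {ε : ℝ} (hε : 0 < ε) (hw : ∀ i, ε ≤ w i) (i : ι) :
    |f i| ≤ weightedL2Norm w f / √ε := by
  rw [weightedL2Norm, ← Real.sqrt_div' _ hε.le]
  refine Real.abs_le_sqrt ((le_div_iff₀' hε).2 ?_)
  calc ε * f i ^ 2 ≤ w i * f i ^ 2 := mul_le_mul_of_nonneg_right (hw i) (sq_nonneg _)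
    _ ≤ ∑ j, w j * f j ^ 2 :=
      Finset.single_le_sum (f := fun j => w j * f j ^ 2)
        (fun j _ => mul_nonneg (hε.le.trans (hw j)) (sq_nonneg _)) (Finset.mem_univ i)

end WeightedL2

section Pairings

variable {ι : Type*} [Fintype ι] {u f : ι → ℝ}

theorem abs_dotProduct_le_sum_abs_mul {C : ℝ} (hf : ∀ i, |f i| ≤ C) :
    |u ⬝ᵥ f| ≤ (∑ i, |u i|) * C := by
  rw [Finset.sum_mul]
  refine (Finset.abs_sum_le_sum_abs _ _).trans (Finset.sum_le_sum fun i _ => ?_)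
  rw [abs_mul]
  exact mul_le_mul_of_nonneg_left (hf i) (abs_nonneg _)

theorem abs_dotProduct_le_sum_abs_mul_of_sum_eq_zero {a b : ℝ} (hu : ∑ i, u i = 0)
    (hf : ∀ i, f i ∈ Set.Icc a b) : |u ⬝ᵥ f| ≤ (∑ i, |u i|) * ((b - a) / 2) := by
  -- Subtracting the midpoint leaves the pairing unchanged and gains the factor `1 / 2`.
  have recenter : u ⬝ᵥ f = u ⬝ᵥ fun i => f i - (a + b) / 2 := by
    simp only [dotProduct, mul_sub, Finset.sum_sub_distrib, ← Finset.sum_mul, hu, zero_mul,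
      sub_zero]
  rw [recenter]
  refine abs_dotProduct_le_sum_abs_mul fun i => abs_le.2 ?_
  constructor <;> linarith [(hf i).1, (hf i).2]

theorem dotProduct_mem_Icc_of_mem_stdSimplex {a b : ℝ} (hu : u ∈ stdSimplex ℝ ι)
    (hf : ∀ i, f i ∈ Set.Icc a b) : u ⬝ᵥ f ∈ Set.Icc a b :=
  (convex_Icc a b).sum_mem (fun i _ => hu.1 i) hu.2 fun i _ => hf i

end Pairings

section WeightedNorms

variable {μ : S → ℝ}

theorem abs_sum_mul_dotProduct_le_wnorm1_mul_div_sqrt {π d f : S → A → ℝ} {ε : ℝ}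
    (hμ : 0 ≤ μ) (hε : 0 < ε) (hπ : ∀ s a, ε ≤ π s a) :
    |∑ s, μ s * (d s ⬝ᵥ f s)| ≤
      wnorm1 μ d * weightedL2Norm μ (fun s => weightedL2Norm (π s) (f s)) / √ε := by
  have pointwise (s : S) :
      |d s ⬝ᵥ f s| ≤ (∑ a, |d s a|) * (weightedL2Norm (π s) (f s) / √ε) :=
    abs_dotProduct_le_sum_abs_mul (abs_le_weightedL2Norm_div_sqrt hε (hπ s))
  calc |∑ s, μ s * (d s ⬝ᵥ f s)|
      ≤ ∑ s, μ s * ((∑ a, |d s a|) * (weightedL2Norm (π s) (f s) / √ε)) := by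
        refine (Finset.abs_sum_le_sum_abs _ _).trans (Finset.sum_le_sum fun s _ => ?_)
        rw [abs_mul, abs_of_nonneg (hμ s)]
        exact mul_le_mul_of_nonneg_left (pointwise s) (hμ s)
    _ = (∑ s, μ s * ((∑ a, |d s a|) * weightedL2Norm (π s) (f s))) / √ε := by
        simp only [Finset.sum_div, mul_div_assoc]
    _ ≤ wnorm1 μ d * weightedL2Norm μ (fun s => weightedL2Norm (π s) (f s)) / √ε :=
        div_le_div_of_nonneg_right (sum_mul_mul_le_weightedL2Norm_mul hμ) (Real.sqrt_nonneg _)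

theorem sq_wnorm1_le_card_mul_sq_wnorm2 (hμ : 0 ≤ μ) (d : S → A → ℝ) :
    wnorm1 μ d ^ 2 ≤ Fintype.card A * wnorm2 μ d ^ 2 := by
  have sq_wnorm2 : wnorm2 μ d ^ 2 = ∑ s, μ s * ∑ a, d s a ^ 2 :=
    Real.sq_sqrt <| Finset.sum_nonneg fun s _ =>
      mul_nonneg (hμ s) (Finset.sum_nonneg fun a _ => sq_nonneg _)
  have sq_wnorm1 : wnorm1 μ d ^ 2 = ∑ s, μ s * (∑ a, |d s a|) ^ 2 := sq_weightedL2Norm hμ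
  rw [sq_wnorm1, sq_wnorm2, Finset.mul_sum]
  refine Finset.sum_le_sum fun s _ => ?_
  rw [mul_left_comm]
  refine mul_le_mul_of_nonneg_left ?_ (hμ s)
  simpa only [sq_abs, Finset.card_univ] using
    sq_sum_le_card_mul_sum_sq (s := Finset.univ) (f := fun a => |d s a|)

end WeightedNorms

section GeometricSeries

variable {ι : Type*} [Fintype ι]

theorem tsum_vecMul_dotProduct {F : ℕ → Matrix ι ι ℝ} (hF : Summable F) (u v : ι → ℝ) :
    ∑' t, u ᵥ* F t ⬝ᵥ v = u ᵥ* (∑' t, F t) ⬝ᵥ v := by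
  let pairing : Matrix ι ι ℝ →+ ℝ :=
    { toFun := fun X => u ᵥ* X ⬝ᵥ v
      map_zero' := by simp only [Matrix.vecMul_zero, zero_dotProduct]
      map_add' := fun X Y => by simp only [Matrix.vecMul_add, add_dotProduct] }
  have pairing_continuous : Continuous pairing :=
    (continuous_const.matrix_vecMul continuous_id).dotProduct continuous_const
  exact (hF.map_tsum pairing pairing_continuous).symm

variable [DecidableEq ι] {T : Matrix ι ι ℝ} {c : ℝ}

theorem summable_smul_pow_of_mem_rowStochastic (hT : T ∈ Matrix.rowStochastic ℝ ι) (hc₀ : 0 ≤ c)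
    (hc₁ : c < 1) : Summable fun t : ℕ => (c • T) ^ t := by
  refine Pi.summable.2 fun i => Pi.summable.2 fun j => ?_
  have entry (t : ℕ) : ((c • T) ^ t) i j = c ^ t * (T ^ t) i j := by
    rw [smul_pow, Matrix.smul_apply, smul_eq_mul]
  have hTt (t : ℕ) : T ^ t ∈ Matrix.rowStochastic ℝ ι := pow_mem hT t
  simp only [entry]
  exact (summable_geometric_of_lt_one hc₀ hc₁).of_nonneg_of_le
    (fun t => mul_nonneg (pow_nonneg hc₀ t) (Matrix.nonneg_of_mem_rowStochastic (hTt t)))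
    (fun t => mul_le_of_le_one_right (pow_nonneg hc₀ t)
      (Matrix.le_one_of_mem_rowStochastic (hTt t)))

end GeometricSeries

namespace MDP

variable (M : MDP S A) {π πt : S → A → ℝ}

theorem one_sub_gamma_pos : 0 < 1 - M.gamma :=
  sub_pos.2 M.gamma_lt_one

theorem horizon_pos : 0 < M.horizon :=
  one_div_pos.2 M.one_sub_gamma_pos

theorem horizon_mul_one_sub_gamma : M.horizon * (1 - M.gamma) = 1 :=
  one_div_mul_cancel M.one_sub_gamma_pos.ne'

/-- The expectation `E[f(s') | s, a]` of a state function at the successor of a state-action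
pair. -/
def nextExp (f : S → ℝ) (s : S) (a : A) : ℝ :=
  M.P s a ⬝ᵥ f

/-- The state transition matrix `P_π` of the Markov chain induced by `π`; it acts on functions by
`*ᵥ` and on distributions by `ᵥ*`. -/
def transMatrix (π : S → A → ℝ) : Matrix S S ℝ :=
  Matrix.of fun s s' => ∑ a, π s a * M.P s a s'

/-- The resolvent `(1 - γ P_π)⁻¹`, as a geometric series. -/
def resolvent (π : S → A → ℝ) : Matrix S S ℝ :=
  ∑' t : ℕ, (M.gamma • M.transMatrix π) ^ t

theorem transMatrix_mulVec (π : S → A → ℝ) (f : S → ℝ) (s : S) :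
    (M.transMatrix π *ᵥ f) s = π s ⬝ᵥ M.nextExp f s := by
  simp only [Matrix.mulVec, dotProduct, transMatrix, nextExp, Matrix.of_apply, Finset.sum_mul,
    Finset.mul_sum, mul_assoc]
  exact Finset.sum_comm

theorem transMatrix_mem_rowStochastic (hπ : IsPolicy π) :
    M.transMatrix π ∈ Matrix.rowStochastic ℝ S := by
  refine Matrix.mem_rowStochastic.2 ⟨fun s s' => ?_, funext fun s => ?_⟩
  · exact Finset.sum_nonneg fun a _ => mul_nonneg (hπ.1 s a) (M.P_nonneg s a s')
  · simp only [transMatrix_mulVec, nextExp, dotProduct, Pi.one_apply, mul_one, M.P_sum_one, hπ.2]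

theorem summable_gamma_smul_transMatrix_pow (hπ : IsPolicy π) :
    Summable fun t : ℕ => (M.gamma • M.transMatrix π) ^ t :=
  summable_smul_pow_of_mem_rowStochastic (M.transMatrix_mem_rowStochastic hπ) M.gamma_pos.le
    M.gamma_lt_one

theorem resolvent_mul_one_sub (hπ : IsPolicy π) :
    M.resolvent π * (1 - M.gamma • M.transMatrix π) = 1 :=
  (M.summable_gamma_smul_transMatrix_pow hπ).tsum_pow_mul_one_sub

theorem one_sub_mul_resolvent (hπ : IsPolicy π) :
    (1 - M.gamma • M.transMatrix π) * M.resolvent π = 1 :=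
  (M.summable_gamma_smul_transMatrix_pow hπ).one_sub_mul_tsum_pow

theorem resolvent_nonneg (hπ : IsPolicy π) (s s' : S) : 0 ≤ M.resolvent π s s' := by
  have entry : M.resolvent π s s' = ∑' t : ℕ, ((M.gamma • M.transMatrix π) ^ t) s s' := by
    simpa [resolvent] using
      (tsum_vecMul_dotProduct (M.summable_gamma_smul_transMatrix_pow hπ)
        (Pi.single s 1) (Pi.single s' 1)).symm
  rw [entry]
  refine tsum_nonneg fun t => ?_
  rw [smul_pow]
  exact mul_nonneg (pow_nonneg M.gamma_pos.le t) <| Matrix.nonneg_of_mem_rowStochastic <|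
    pow_mem (M.transMatrix_mem_rowStochastic hπ) t

theorem resolvent_mulVec_eq_iff (hπ : IsPolicy π) {f g : S → ℝ} :
    M.resolvent π *ᵥ g = f ↔ g = f - M.gamma • M.transMatrix π *ᵥ f := by
  have generator : f - M.gamma • M.transMatrix π *ᵥ f =
      (1 - M.gamma • M.transMatrix π) *ᵥ f := by
    rw [Matrix.sub_mulVec, Matrix.one_mulVec, Matrix.smul_mulVec]
  rw [generator]
  constructor
  · rintro rfl
    rw [Matrix.mulVec_mulVec, M.one_sub_mul_resolvent hπ, Matrix.one_mulVec]
  · rintro rfl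
    rw [Matrix.mulVec_mulVec, M.resolvent_mul_one_sub hπ, Matrix.one_mulVec]

theorem resolvent_mulVec_mono (hπ : IsPolicy π) {f g : S → ℝ} (hfg : f ≤ g) :
    M.resolvent π *ᵥ f ≤ M.resolvent π *ᵥ g := fun s =>
  dotProduct_le_dotProduct_of_nonneg_left hfg (M.resolvent_nonneg hπ s)

theorem resolvent_mulVec_one (hπ : IsPolicy π) :
    M.resolvent π *ᵥ 1 = fun _ => M.horizon := by
  have transMatrix_const : M.transMatrix π *ᵥ (fun _ => M.horizon) = fun _ => M.horizon := by
    have const_eq : (fun _ : S => M.horizon) = M.horizon • 1 := by ext; simp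
    rw [const_eq, Matrix.mulVec_smul,
      Matrix.one_vecMul_of_mem_rowStochastic (M.transMatrix_mem_rowStochastic hπ)]
  rw [M.resolvent_mulVec_eq_iff hπ, transMatrix_const]
  funext s
  simp only [Pi.one_apply, Pi.sub_apply, Pi.smul_apply, smul_eq_mul]
  linarith [M.horizon_mul_one_sub_gamma]

theorem distAt_eq_vecMul (π : S → A → ℝ) (ρ : S → ℝ) (t : ℕ) :
    M.distAt π ρ t = ρ ᵥ* M.transMatrix π ^ t := by
  have stepDist_eq (d : S → ℝ) : M.stepDist π d = d ᵥ* M.transMatrix π := by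
    funext s'
    simp only [stepDist, Matrix.vecMul, dotProduct, transMatrix, Matrix.of_apply, Finset.mul_sum,
      mul_assoc]
  induction t with
  | zero => rw [pow_zero, Matrix.vecMul_one]; rfl
  | succ t ih =>
    rw [distAt, Function.iterate_succ_apply', ← distAt, ih, stepDist_eq, Matrix.vecMul_vecMul,
      pow_succ]

theorem tsum_gamma_pow_mul_distAt_dotProduct (hπ : IsPolicy π) (ρ f : S → ℝ) :
    ∑' t : ℕ, M.gamma ^ t * (M.distAt π ρ t ⬝ᵥ f) = ρ ᵥ* M.resolvent π ⬝ᵥ f := by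
  rw [resolvent, ← tsum_vecMul_dotProduct (M.summable_gamma_smul_transMatrix_pow hπ)]
  simp only [distAt_eq_vecMul, smul_pow, Matrix.vecMul_smul, smul_dotProduct, smul_eq_mul]

theorem valueFrom_eq_dotProduct_resolvent (hπ : IsPolicy π) (ρ : S → ℝ) :
    M.valueFrom π ρ = ρ ⬝ᵥ M.resolvent π *ᵥ fun s => π s ⬝ᵥ M.r s := by
  rw [Matrix.dotProduct_mulVec, ← M.tsum_gamma_pow_mul_distAt_dotProduct hπ]
  simp only [valueFrom, expCost, dotProduct, Finset.mul_sum, mul_assoc]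

theorem valueAt_eq_resolvent_mulVec (hπ : IsPolicy π) :
    M.valueAt π = M.resolvent π *ᵥ fun s => π s ⬝ᵥ M.r s := by
  funext s
  have dirac : (fun s' => if s' = s then (1 : ℝ) else 0) = Pi.single s 1 := by
    funext s'
    simp only [Pi.single_apply]
  rw [valueAt, dirac, M.valueFrom_eq_dotProduct_resolvent hπ, single_one_dotProduct]

theorem value_eq_dotProduct_valueAt (hπ : IsPolicy π) :
    M.value π = M.rho0 ⬝ᵥ M.valueAt π := by
  rw [value, M.valueFrom_eq_dotProduct_resolvent hπ, M.valueAt_eq_resolvent_mulVec hπ]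

theorem occFrom_eq_vecMul_resolvent (hπ : IsPolicy π) (ρ : S → ℝ) :
    M.occFrom π ρ = (1 - M.gamma) • (ρ ᵥ* M.resolvent π) := by
  funext s
  have := M.tsum_gamma_pow_mul_distAt_dotProduct hπ ρ (Pi.single s 1)
  simp only [dotProduct_single_one] at this
  rw [occFrom, this, Pi.smul_apply, smul_eq_mul]

theorem occFrom_nonneg (hπ : IsPolicy π) {ρ : S → ℝ} (hρ : 0 ≤ ρ) : 0 ≤ M.occFrom π ρ := by
  rw [M.occFrom_eq_vecMul_resolvent hπ]
  exact smul_nonneg M.one_sub_gamma_pos.le fun s' =>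
    dotProduct_nonneg_of_nonneg hρ fun s => M.resolvent_nonneg hπ s s'

theorem occFrom_dotProduct_sub (hπ : IsPolicy π) (ρ f : S → ℝ) :
    M.occFrom π ρ ⬝ᵥ (f - M.gamma • M.transMatrix π *ᵥ f) = (1 - M.gamma) * (ρ ⬝ᵥ f) := by
  rw [M.occFrom_eq_vecMul_resolvent hπ, smul_dotProduct, ← Matrix.dotProduct_mulVec,
    (M.resolvent_mulVec_eq_iff hπ).2 rfl, smul_eq_mul]

theorem gamma_mul_occFrom_dotProduct_transMatrix_mulVec_le (hπ : IsPolicy π) {ρ f : S → ℝ}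
    (hρ : 0 ≤ ρ) (hf : 0 ≤ f) :
    M.gamma * (M.occFrom π ρ ⬝ᵥ M.transMatrix π *ᵥ f) ≤ M.occFrom π ρ ⬝ᵥ f := by
  have flow := M.occFrom_dotProduct_sub hπ ρ f
  rw [dotProduct_sub, dotProduct_smul, smul_eq_mul] at flow
  linarith [mul_nonneg M.one_sub_gamma_pos.le (dotProduct_nonneg_of_nonneg hρ hf)]

theorem Qfun_eq_add_nextExp (π : S → A → ℝ) (s : S) :
    M.Qfun π s = M.r s + M.gamma • M.nextExp (M.valueAt π) s :=
  rfl

theorem valueAt_eq_dotProduct_Qfun (hπ : IsPolicy π) (s : S) :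
    M.valueAt π s = π s ⬝ᵥ M.Qfun π s := by
  have bellman := congrFun
    ((M.resolvent_mulVec_eq_iff hπ).1 (M.valueAt_eq_resolvent_mulVec hπ).symm) s
  rw [Pi.sub_apply, Pi.smul_apply, transMatrix_mulVec] at bellman
  rw [Qfun_eq_add_nextExp, dotProduct_add, bellman, dotProduct_smul, sub_add_cancel]

theorem valueAt_mem_Icc (hπ : IsPolicy π) (s : S) :
    M.valueAt π s ∈ Set.Icc 0 M.horizon := by
  have cost_mem (s : S) : π s ⬝ᵥ M.r s ∈ Set.Icc (0 : ℝ) 1 :=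
    dotProduct_mem_Icc_of_mem_stdSimplex ⟨hπ.1 s, hπ.2 s⟩
      fun a => ⟨M.r_nonneg s a, M.r_le_one s a⟩
  rw [M.valueAt_eq_resolvent_mulVec hπ]
  constructor
  · simpa using M.resolvent_mulVec_mono hπ (f := 0) (fun s => (cost_mem s).1) s
  · simpa only [M.resolvent_mulVec_one hπ] using
      M.resolvent_mulVec_mono hπ (g := 1) (fun s => (cost_mem s).2) s

theorem Qfun_mem_Icc (hπ : IsPolicy π) (s : S) (a : A) :
    M.Qfun π s a ∈ Set.Icc 0 M.horizon := by
  obtain ⟨next_nonneg, next_le⟩ : M.nextExp (M.valueAt π) s a ∈ Set.Icc 0 M.horizon :=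
    dotProduct_mem_Icc_of_mem_stdSimplex ⟨M.P_nonneg s a, M.P_sum_one s a⟩ (M.valueAt_mem_Icc hπ)
  rw [Qfun_eq_add_nextExp, Pi.add_apply, Pi.smul_apply, smul_eq_mul]
  constructor
  · exact add_nonneg (M.r_nonneg s a) (mul_nonneg M.gamma_pos.le next_nonneg)
  · linarith [M.r_le_one s a, mul_le_mul_of_nonneg_left next_le M.gamma_pos.le,
      M.horizon_mul_one_sub_gamma]

theorem Qfun_sub_Qfun (π πt : S → A → ℝ) (s : S) :
    M.Qfun πt s - M.Qfun π s = M.gamma • M.nextExp (M.valueAt πt - M.valueAt π) s := by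
  funext a
  simp only [Qfun_eq_add_nextExp, nextExp, dotProduct_sub, Pi.sub_apply, Pi.add_apply,
    Pi.smul_apply, smul_eq_mul]
  ring

/-- The one-step gain `s ↦ ⟨π̃_s - π_s, Q^{π̃}_s⟩` of the performance difference lemma, with the
`Q`-function of the new policy `π̃`. -/
def policyGain (π πt : S → A → ℝ) (s : S) : ℝ :=
  (πt s - π s) ⬝ᵥ M.Qfun πt s

theorem policyGain_eq_sub_transMatrix_mulVec (hπ : IsPolicy π) (hπt : IsPolicy πt) :
    M.policyGain π πt = (M.valueAt πt - M.valueAt π) -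
      M.gamma • M.transMatrix π *ᵥ (M.valueAt πt - M.valueAt π) := by
  funext s
  rw [Pi.sub_apply, Pi.sub_apply, Pi.smul_apply, transMatrix_mulVec, ← dotProduct_smul,
    ← Qfun_sub_Qfun, M.valueAt_eq_dotProduct_Qfun hπt, M.valueAt_eq_dotProduct_Qfun hπ,
    policyGain, sub_dotProduct, dotProduct_sub]
  ring

theorem value_sub_value (hπ : IsPolicy π) (hπt : IsPolicy πt) :
    M.value πt - M.value π = M.horizon * (M.occ π ⬝ᵥ M.policyGain π πt) := by
  rw [occ, M.policyGain_eq_sub_transMatrix_mulVec hπ hπt, M.occFrom_dotProduct_sub hπ, ← mul_assoc,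
    M.horizon_mul_one_sub_gamma, one_mul, dotProduct_sub, M.value_eq_dotProduct_valueAt hπt,
    M.value_eq_dotProduct_valueAt hπ]

theorem value_sub_value_sub_innerSA_gradV (hπ : IsPolicy π) (hπt : IsPolicy πt) :
    M.value πt - M.value π - innerSA (M.gradV π) (fun s a => πt s a - π s a) =
      M.horizon * M.gamma * ∑ s, M.occ π s *
        ((πt s - π s) ⬝ᵥ M.nextExp (M.valueAt πt - M.valueAt π) s) := by
  have gradV_pairing : innerSA (M.gradV π) (fun s a => πt s a - π s a) =
      M.horizon * ∑ s, M.occ π s * ((πt s - π s) ⬝ᵥ M.Qfun π s) := by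
    simp only [innerSA, gradV, dotProduct, Finset.mul_sum, Pi.sub_apply]
    exact Finset.sum_congr rfl fun s _ => Finset.sum_congr rfl fun a _ => by ring
  have gain_sub (s : S) : M.policyGain π πt s - (πt s - π s) ⬝ᵥ M.Qfun π s =
      M.gamma * ((πt s - π s) ⬝ᵥ M.nextExp (M.valueAt πt - M.valueAt π) s) := by
    rw [policyGain, ← dotProduct_sub, Qfun_sub_Qfun, dotProduct_smul, smul_eq_mul]
  rw [M.value_sub_value hπ hπt, gradV_pairing, ← mul_sub, dotProduct, ← Finset.sum_sub_distrib,
    mul_assoc, Finset.mul_sum (a := M.gamma)]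
  simp only [← mul_sub, gain_sub, mul_left_comm]

theorem abs_policyGain_le (hπ : IsPolicy π) (hπt : IsPolicy πt) (s : S) :
    |M.policyGain π πt s| ≤ M.horizon / 2 * ∑ a, |πt s a - π s a| := by
  have mass_zero : ∑ a, (πt s - π s) a = 0 := by
    simp only [Pi.sub_apply, Finset.sum_sub_distrib, hπ.2, hπt.2, sub_self]
  simpa only [policyGain, sub_zero, mul_comm, Pi.sub_apply] using
    abs_dotProduct_le_sum_abs_mul_of_sum_eq_zero mass_zero (M.Qfun_mem_Icc hπt s)

theorem sqrt_gamma_mul_weightedL2Norm_nextExp_le (hπ : IsPolicy π) {ρ : S → ℝ} (hρ : 0 ≤ ρ)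
    (f : S → ℝ) :
    √M.gamma * weightedL2Norm (M.occFrom π ρ) (fun s => weightedL2Norm (π s) (M.nextExp f s)) ≤
      weightedL2Norm (M.occFrom π ρ) f := by
  have occ_nonneg := M.occFrom_nonneg hπ hρ
  have jensen (s : S) :
      weightedL2Norm (π s) (M.nextExp f s) ^ 2 ≤ (M.transMatrix π *ᵥ (f ^ 2)) s := by
    rw [sq_weightedL2Norm (hπ.1 s), transMatrix_mulVec]
    exact Finset.sum_le_sum fun a _ => mul_le_mul_of_nonneg_left
      (Real.pow_arith_mean_le_arith_mean_pow_of_even _ (M.P s a) f (fun s' _ => M.P_nonneg s a s')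
        (M.P_sum_one s a) even_two) (hπ.1 s a)
  rw [weightedL2Norm, ← Real.sqrt_mul M.gamma_pos.le]
  refine Real.sqrt_le_sqrt ?_
  calc M.gamma * ∑ s, M.occFrom π ρ s * weightedL2Norm (π s) (M.nextExp f s) ^ 2
      ≤ M.gamma * (M.occFrom π ρ ⬝ᵥ M.transMatrix π *ᵥ (f ^ 2)) :=
        mul_le_mul_of_nonneg_left
          (dotProduct_le_dotProduct_of_nonneg_left jensen occ_nonneg) M.gamma_pos.le
    _ ≤ M.occFrom π ρ ⬝ᵥ (f ^ 2) :=
        M.gamma_mul_occFrom_dotProduct_transMatrix_mulVec_le hπ hρ fun s => sq_nonneg _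

theorem sqrt_gamma_mul_weightedL2Norm_transMatrix_mulVec_le (hπ : IsPolicy π) {ρ : S → ℝ}
    (hρ : 0 ≤ ρ) (f : S → ℝ) :
    √M.gamma * weightedL2Norm (M.occFrom π ρ) (M.transMatrix π *ᵥ f) ≤
      weightedL2Norm (M.occFrom π ρ) f := by
  refine le_trans (mul_le_mul_of_nonneg_left ?_ (Real.sqrt_nonneg _))
    (M.sqrt_gamma_mul_weightedL2Norm_nextExp_le hπ hρ f)
  refine weightedL2Norm_mono (M.occFrom_nonneg hπ hρ) fun s => ?_
  rw [transMatrix_mulVec]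
  exact abs_dotProduct_le_weightedL2Norm ⟨hπ.1 s, hπ.2 s⟩

theorem one_le_two_mul_horizon_mul_one_sub_sqrt_gamma :
    1 ≤ 2 * M.horizon * (1 - √M.gamma) := by
  have sqrt_le_one : √M.gamma ≤ 1 := Real.sqrt_le_one.2 M.gamma_lt_one.le
  calc 1 = M.horizon * (1 - √M.gamma) * (1 + √M.gamma) := by
        linear_combination (-1) * M.horizon_mul_one_sub_gamma +
          M.horizon * Real.sq_sqrt M.gamma_pos.le
    _ ≤ M.horizon * (1 - √M.gamma) * 2 :=
        mul_le_mul_of_nonneg_left (by linarith)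
          (mul_nonneg M.horizon_pos.le (sub_nonneg.2 sqrt_le_one))
    _ = 2 * M.horizon * (1 - √M.gamma) := by ring

theorem weightedL2Norm_le_two_mul_horizon_mul (hπ : IsPolicy π) {ρ : S → ℝ} (hρ : 0 ≤ ρ)
    (f : S → ℝ) :
    weightedL2Norm (M.occFrom π ρ) f ≤
      2 * M.horizon * weightedL2Norm (M.occFrom π ρ) (f - M.gamma • M.transMatrix π *ᵥ f) := by
  set g := f - M.gamma • M.transMatrix π *ᵥ f with hg
  have contraction : weightedL2Norm (M.occFrom π ρ) (M.gamma • M.transMatrix π *ᵥ f) ≤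
      √M.gamma * weightedL2Norm (M.occFrom π ρ) f := by
    rw [weightedL2Norm_smul, abs_of_pos M.gamma_pos]
    nth_rw 1 [← Real.mul_self_sqrt M.gamma_pos.le]
    rw [mul_assoc]
    exact mul_le_mul_of_nonneg_left
      (M.sqrt_gamma_mul_weightedL2Norm_transMatrix_mulVec_le hπ hρ f) (Real.sqrt_nonneg _)
  have triangle : weightedL2Norm (M.occFrom π ρ) f ≤ weightedL2Norm (M.occFrom π ρ) g +
      weightedL2Norm (M.occFrom π ρ) (M.gamma • M.transMatrix π *ᵥ f) := by
    simpa only [hg, sub_add_cancel] using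
      weightedL2Norm_add_le (f := g) (g := M.gamma • M.transMatrix π *ᵥ f)
        (M.occFrom_nonneg hπ hρ)
  calc weightedL2Norm (M.occFrom π ρ) f
      ≤ 2 * M.horizon * (1 - √M.gamma) * weightedL2Norm (M.occFrom π ρ) f :=
        le_mul_of_one_le_left weightedL2Norm_nonneg
          M.one_le_two_mul_horizon_mul_one_sub_sqrt_gamma
    _ = 2 * M.horizon * (weightedL2Norm (M.occFrom π ρ) f -
          √M.gamma * weightedL2Norm (M.occFrom π ρ) f) := by ring
    _ ≤ 2 * M.horizon * weightedL2Norm (M.occFrom π ρ) g :=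
        mul_le_mul_of_nonneg_left (by linarith) (mul_nonneg zero_le_two M.horizon_pos.le)

theorem weightedL2Norm_valueAt_sub_le (hπ : IsPolicy π) (hπt : IsPolicy πt) {ρ : S → ℝ}
    (hρ : 0 ≤ ρ) :
    weightedL2Norm (M.occFrom π ρ) (M.valueAt πt - M.valueAt π) ≤
      M.horizon ^ 2 * wnorm1 (M.occFrom π ρ) (fun s a => πt s a - π s a) := by
  have gain_le : weightedL2Norm (M.occFrom π ρ) (M.policyGain π πt) ≤
      M.horizon / 2 * wnorm1 (M.occFrom π ρ) (fun s a => πt s a - π s a) := by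
    refine (weightedL2Norm_mono (M.occFrom_nonneg hπ hρ)
      (M.abs_policyGain_le hπ hπt)).trans_eq ?_
    exact (weightedL2Norm_smul _).trans (by rw [abs_of_pos (half_pos M.horizon_pos)]; rfl)
  calc weightedL2Norm (M.occFrom π ρ) (M.valueAt πt - M.valueAt π)
      ≤ 2 * M.horizon * weightedL2Norm (M.occFrom π ρ) (M.policyGain π πt) := by
        rw [M.policyGain_eq_sub_transMatrix_mulVec hπ hπt]
        exact M.weightedL2Norm_le_two_mul_horizon_mul hπ hρ _
    _ ≤ 2 * M.horizon *
          (M.horizon / 2 * wnorm1 (M.occFrom π ρ) (fun s a => πt s a - π s a)) :=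
        mul_le_mul_of_nonneg_left gain_le (mul_nonneg zero_le_two M.horizon_pos.le)
    _ = M.horizon ^ 2 * wnorm1 (M.occFrom π ρ) (fun s a => πt s a - π s a) := by ring

theorem abs_value_sub_value_sub_innerSA_gradV_le_wnorm1 {ε : ℝ} (hπ : IsPolicy π)
    (hπt : IsPolicy πt) (hε : 0 < ε) (hπε : ∀ s a, ε ≤ π s a) :
    |M.value πt - M.value π - innerSA (M.gradV π) (fun s a => πt s a - π s a)| ≤
      M.horizon ^ 3 / √ε * wnorm1 (M.occ π) (fun s a => πt s a - π s a) ^ 2 := by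
  set h := M.valueAt πt - M.valueAt π
  set D := wnorm1 (M.occ π) (fun s a => πt s a - π s a)
  set N := weightedL2Norm (M.occ π) (fun s => weightedL2Norm (π s) (M.nextExp h s))
  have pairing_le : |∑ s, M.occ π s * ((πt s - π s) ⬝ᵥ M.nextExp h s)| ≤ D * N / √ε :=
    abs_sum_mul_dotProduct_le_wnorm1_mul_div_sqrt (M.occFrom_nonneg hπ M.rho0_nonneg) hε hπε
  have gamma_mul_N_le : M.gamma * N ≤ M.horizon ^ 2 * D := by
    have gamma_le_sqrt : M.gamma ≤ √M.gamma :=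
      Real.le_sqrt_of_sq_le (pow_le_of_le_one M.gamma_pos.le M.gamma_lt_one.le two_ne_zero)
    calc M.gamma * N ≤ √M.gamma * N :=
          mul_le_mul_of_nonneg_right gamma_le_sqrt weightedL2Norm_nonneg
      _ ≤ weightedL2Norm (M.occ π) h :=
          M.sqrt_gamma_mul_weightedL2Norm_nextExp_le hπ M.rho0_nonneg h
      _ ≤ M.horizon ^ 2 * D := M.weightedL2Norm_valueAt_sub_le hπ hπt M.rho0_nonneg
  rw [M.value_sub_value_sub_innerSA_gradV hπ hπt, abs_mul,
    abs_of_pos (mul_pos M.horizon_pos M.gamma_pos)]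
  calc M.horizon * M.gamma * |∑ s, M.occ π s * ((πt s - π s) ⬝ᵥ M.nextExp h s)|
      ≤ M.horizon * M.gamma * (D * N / √ε) :=
        mul_le_mul_of_nonneg_left pairing_le (mul_pos M.horizon_pos M.gamma_pos).le
    _ = M.horizon / √ε * D * (M.gamma * N) := by ring
    _ ≤ M.horizon / √ε * D * (M.horizon ^ 2 * D) :=
        mul_le_mul_of_nonneg_left gamma_mul_N_le
          (mul_nonneg (div_nonneg M.horizon_pos.le (Real.sqrt_nonneg _)) (Real.sqrt_nonneg _))
    _ = M.horizon ^ 3 / √ε * D ^ 2 := by ring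

end MDP

/-- Lemma: local smoothness of the value function. -/
theorem value_local_smoothness [Nonempty S] [Nonempty A]
    (M : MDP S A) (π πt : S → A → ℝ) (ε : ℝ)
    (hπ : IsPolicy π) (hπt : IsPolicy πt)
    (hε : ε = ⨅ sa : S × A, π sa.1 sa.2) (hεpos : 0 < ε) :
    |M.value πt - M.value π -
        innerSA (M.gradV π) (fun s a => πt s a - π s a)| ≤
      min
        (M.horizon ^ 3 / Real.sqrt ε *
          (wnorm1 (M.occ π) (fun s a => πt s a - π s a)) ^ 2)
        ((Fintype.card A : ℝ) * M.horizon ^ 3 / Real.sqrt ε *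
          (wnorm2 (M.occ π) (fun s a => πt s a - π s a)) ^ 2) := by
  have hπε (s : S) (a : A) : ε ≤ π s a :=
    hε ▸ ciInf_le (Set.finite_range fun sa : S × A => π sa.1 sa.2).bddBelow (s, a)
  have wnorm1_bound := M.abs_value_sub_value_sub_innerSA_gradV_le_wnorm1 hπ hπt hεpos hπε
  refine le_min wnorm1_bound (wnorm1_bound.trans ?_)
  rw [mul_div_assoc, mul_right_comm, mul_comm]
  exact mul_le_mul_of_nonneg_right
    (sq_wnorm1_le_card_mul_sq_wnorm2 (M.occFrom_nonneg hπ M.rho0_nonneg) _)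
    (div_nonneg (pow_nonneg M.horizon_pos.le 3) (Real.sqrt_nonneg ε))
end
end

section
/- Bregman proximal step descent: let ‖·‖ be a norm and x ∈ X a point such that |f(y) − f(x) − ⟨∇f(x), y−x⟩| ≤ (β/2)‖y−x‖² for all y ∈ X. Assume: (1) 0 < η ≤ 1/(2β); (2) h : ℝ^d → ℝ is 1-strongly convex and has an L_h-Lipschitz gradient w.r.t. ‖·‖; (3) ‖ĝ(x) − ∇f(x)‖_* ≤ ε_grad. Then for any x⁺ ∈ T_η^{ε_opt}(x; h): f(x⁺) ≤ f(x) − (η/(2L_h²)) ‖G_η(x, x⁺; h)‖_*² + η ε_grad ‖G_η(x, x⁺; h)‖_* + ε_opt. -/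
open scoped BigOperators

noncomputable section

/-- Standard inner product on `ℝ^d`. -/
def dotd {d : ℕ} (u v : Fin d → ℝ) : ℝ := ∑ i, u i * v i

/-- `N` is a norm on `ℝ^d`. -/
def IsNorm {d : ℕ} (N : (Fin d → ℝ) → ℝ) : Prop :=
  (∀ x, 0 ≤ N x) ∧ (∀ x, N x = 0 ↔ x = 0) ∧
    (∀ (c : ℝ) (x : Fin d → ℝ), N (c • x) = |c| * N x) ∧ ∀ x y, N (x + y) ≤ N x + N y

/-- The dual norm of `N`. -/
def dualNorm {d : ℕ} (N : (Fin d → ℝ) → ℝ) (z : Fin d → ℝ) : ℝ :=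
  sSup ((fun u => dotd z u) '' {u | N u ≤ 1})

/-- Bregman divergence of `h` whose gradient is `gh`. -/
def breg {d : ℕ} (h : (Fin d → ℝ) → ℝ) (gh : (Fin d → ℝ) → Fin d → ℝ)
    (u v : Fin d → ℝ) : ℝ :=
  h u - h v - dotd (gh v) (u - v)

/-- Bregman gradient mapping `G_η(x, x⁺; h) = (1/η)(∇h(x) − ∇h(x⁺))`. -/
def Gmap {d : ℕ} (gh : (Fin d → ℝ) → Fin d → ℝ) (η : ℝ) (x xp : Fin d → ℝ) :
    Fin d → ℝ :=
  (1 / η) • (gh x - gh xp)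

/-- The set `T_η^{εopt}(x; h)` of `εopt`-approximate Bregman proximal updates at `x`,
for gradient estimate `g = ĝ(x)`. -/
def proxSet {d : ℕ} (X : Set (Fin d → ℝ)) (g : Fin d → ℝ)
    (gh : (Fin d → ℝ) → Fin d → ℝ) (η εopt : ℝ) (x : Fin d → ℝ) :
    Set (Fin d → ℝ) :=
  {xp | xp ∈ X ∧ ∀ z ∈ X, dotd (g + (1 / η) • (gh xp - gh x)) (z - xp) ≥ -εopt}

/-!
Write `φ = ∇h(x) - ∇h(x⁺)` and `v = x - x⁺`. Testing the approximate optimality of `x⁺` against `x`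
and using smoothness of `f` gives
`f(x) - f(x⁺) ≥ φ(v) / η - (β / 2) ‖v‖² - ‖ĝ - ∇f‖_* ‖v‖ - ε_opt`. Strong convexity of `h` makes its
gradient strongly monotone, `‖v‖² ≤ φ(v)`, so the first two terms leave at least `‖v‖² / (2η)`.
Since `‖v‖ ≤ ‖φ‖_* ≤ L_h ‖v‖`, both occurrences of `‖v‖` can be exchanged for the dual norm of the
gradient mapping `φ / η`. All of this takes place in the pairing of a normed space with its dual.
-/

section NormedSpace

variable {E : Type*} [SeminormedAddCommGroup E] [NormedSpace ℝ E]

theorem isLUB_image_closedUnitBall_dual_norm (φ : StrongDual ℝ E) :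
    IsLUB (φ '' {u | ‖u‖ ≤ 1}) ‖φ‖ := by
  constructor
  · rintro _ ⟨u, hu, rfl⟩
    exact (le_abs_self _).trans (φ.unit_le_opNorm u hu)
  · intro C hC
    have hle (u : E) (hu : ‖u‖ ≤ 1) : φ u ≤ C := hC ⟨u, hu, rfl⟩
    refine φ.opNorm_le_of_unit_norm (by simpa using hle 0) fun u hu => abs_le'.2 ⟨hle u hu.le, ?_⟩
    simpa using hle (-u) (by simpa using hu.le)

theorem norm_le_dual_norm_of_sq_norm_le_apply {φ : StrongDual ℝ E} {v : E}
    (hφ : ‖v‖ ^ 2 ≤ φ v) : ‖v‖ ≤ ‖φ‖ := by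
  rcases (norm_nonneg v).eq_or_lt with hv | hv
  · exact hv ▸ norm_nonneg φ
  · refine le_of_mul_le_mul_right ?_ hv
    calc ‖v‖ * ‖v‖ = ‖v‖ ^ 2 := (sq _).symm
      _ ≤ φ v := hφ
      _ ≤ ‖φ‖ * ‖v‖ := (le_abs_self _).trans (φ.le_opNorm v)

theorem prox_step_le_sub_sq_norm {f : E → ℝ} {f' g : StrongDual ℝ E} {h' : E → StrongDual ℝ E}
    {β η εopt : ℝ} {x y : E}
    (hsmooth : f y ≤ f x + f' (y - x) + β / 2 * ‖y - x‖ ^ 2)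
    (hη : 0 < η) (hηβ : η * β ≤ 1)
    (hmono : ‖x - y‖ ^ 2 ≤ (h' x - h' y) (x - y))
    (hprox : -εopt ≤ (g + η⁻¹ • (h' y - h' x)) (x - y)) :
    f y ≤ f x - η⁻¹ / 2 * ‖x - y‖ ^ 2 + ‖g - f'‖ * ‖x - y‖ + εopt := by
  have hgrad : (g - f') (x - y) ≤ ‖g - f'‖ * ‖x - y‖ :=
    (le_abs_self _).trans ((g - f').le_opNorm _)
  have hβ : β * ‖x - y‖ ^ 2 ≤ η⁻¹ * ‖x - y‖ ^ 2 := by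
    gcongr
    rwa [← one_div, le_div_iff₀' hη]
  have hmono' : η⁻¹ * ‖x - y‖ ^ 2 ≤ η⁻¹ * (h' x - h' y) (x - y) := by gcongr
  rw [norm_sub_rev] at hsmooth
  have hflip : f' (y - x) = -f' (x - y) := by rw [← map_neg, neg_sub]
  simp only [add_apply, sub_apply, smul_apply, smul_eq_mul] at hprox hmono' hgrad
  linarith

theorem div_mul_sq_norm_inv_smul_le {F : Type*} [SeminormedAddCommGroup F] [NormedSpace ℝ F]
    {φ : F} {η L r : ℝ} (hη : 0 < η) (hφ : ‖φ‖ ≤ L * r) :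
    η / (2 * L ^ 2) * ‖η⁻¹ • φ‖ ^ 2 ≤ η⁻¹ / 2 * r ^ 2 := by
  have hsq : ‖φ‖ ^ 2 / L ^ 2 ≤ r ^ 2 := by
    refine div_le_of_le_mul₀ (sq_nonneg L) (sq_nonneg r) ?_
    calc ‖φ‖ ^ 2 ≤ (L * r) ^ 2 := by gcongr
      _ = r ^ 2 * L ^ 2 := by ring
  calc η / (2 * L ^ 2) * ‖η⁻¹ • φ‖ ^ 2 = η⁻¹ / 2 * (‖φ‖ ^ 2 / L ^ 2) := by
        rw [norm_smul, norm_inv, Real.norm_of_nonneg hη.le]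
        field_simp
    _ ≤ η⁻¹ / 2 * r ^ 2 := by gcongr

theorem bregman_prox_descent_general {f : E → ℝ} {f' g : StrongDual ℝ E}
    {h' : E → StrongDual ℝ E} {β η L εgrad εopt : ℝ} {x y : E}
    (hsmooth : f y ≤ f x + f' (y - x) + β / 2 * ‖y - x‖ ^ 2)
    (hη : 0 < η) (hηβ : η * β ≤ 1)
    (hmono : ‖x - y‖ ^ 2 ≤ (h' x - h' y) (x - y))
    (hLip : ‖h' x - h' y‖ ≤ L * ‖x - y‖)
    (hg : ‖g - f'‖ ≤ εgrad)
    (hprox : -εopt ≤ (g + η⁻¹ • (h' y - h' x)) (x - y)) :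
    f y ≤ f x - η / (2 * L ^ 2) * ‖η⁻¹ • (h' x - h' y)‖ ^ 2
      + η * εgrad * ‖η⁻¹ • (h' x - h' y)‖ + εopt := by
  have herror : ‖g - f'‖ * ‖x - y‖ ≤ η * εgrad * ‖η⁻¹ • (h' x - h' y)‖ :=
    calc ‖g - f'‖ * ‖x - y‖ ≤ εgrad * ‖h' x - h' y‖ :=
          mul_le_mul hg (norm_le_dual_norm_of_sq_norm_le_apply hmono) (norm_nonneg _)
            ((norm_nonneg _).trans hg)
      _ = η * εgrad * ‖η⁻¹ • (h' x - h' y)‖ := by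
          rw [norm_smul, norm_inv, Real.norm_of_nonneg hη.le]
          field_simp
  linarith [prox_step_le_sub_sq_norm hsmooth hη hηβ hmono hprox,
    div_mul_sq_norm_inv_smul_le hη hLip]

end NormedSpace

theorem breg_add_breg_swap {d : ℕ} (h : (Fin d → ℝ) → ℝ) (gh : (Fin d → ℝ) → Fin d → ℝ)
    (u v : Fin d → ℝ) : breg h gh u v + breg h gh v u = dotd (gh u - gh v) (u - v) := by
  change h u - h v - gh v ⬝ᵥ (u - v) + (h v - h u - gh u ⬝ᵥ (v - u)) = (gh u - gh v) ⬝ᵥ (u - v)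
  rw [sub_dotProduct, ← neg_sub u v, dotProduct_neg]
  ring

namespace IsNorm

variable {d : ℕ} {N : (Fin d → ℝ) → ℝ}

/-- The space `ℝ^d` normed by `N`. It is a type synonym because `Fin d → ℝ` itself already carries
the sup norm. -/
def Space (_hN : IsNorm N) : Type := Fin d → ℝ

variable (hN : IsNorm N)

instance : AddCommGroup hN.Space := inferInstanceAs (AddCommGroup (Fin d → ℝ))

instance : Module ℝ hN.Space := inferInstanceAs (Module ℝ (Fin d → ℝ))

instance : FiniteDimensional ℝ hN.Space := inferInstanceAs (FiniteDimensional ℝ (Fin d → ℝ))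

instance : Norm hN.Space := ⟨N⟩

theorem normedSpaceCore : NormedSpace.Core ℝ hN.Space where
  norm_nonneg := hN.1
  norm_eq_zero_iff := hN.2.1
  norm_smul := hN.2.2.1
  norm_triangle := hN.2.2.2

instance : NormedAddCommGroup hN.Space := NormedAddCommGroup.ofCore hN.normedSpaceCore

instance : NormedSpace ℝ hN.Space := NormedSpace.ofCore hN.normedSpaceCore

/-- The identification of `ℝ^d` with the dual of `(ℝ^d, N)` through the standard inner product. -/
def dotDual : (Fin d → ℝ) →ₗ[ℝ] StrongDual ℝ hN.Space :=
  (LinearMap.toContinuousLinearMap (E := hN.Space) (F' := ℝ)).toLinearMap ∘ₗ dotProductBilin ℝ ℝ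

theorem norm_dotDual (z : Fin d → ℝ) : ‖hN.dotDual z‖ = dualNorm N z :=
  ((isLUB_image_closedUnitBall_dual_norm (hN.dotDual z)).csSup_eq
    (Set.Nonempty.image _ ⟨0, by simp⟩)).symm

theorem sq_norm_sub_le_of_sq_le_breg {h : (Fin d → ℝ) → ℝ} {gh : (Fin d → ℝ) → Fin d → ℝ}
    (hsc : ∀ u v, breg h gh u v ≥ (1 / 2) * (N (u - v)) ^ 2) (u v : hN.Space) :
    ‖u - v‖ ^ 2 ≤ (hN.dotDual (gh u) - hN.dotDual (gh v)) (u - v) := by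
  have huv : 1 / 2 * ‖u - v‖ ^ 2 ≤ breg h gh u v := hsc u v
  have hvu : 1 / 2 * ‖v - u‖ ^ 2 ≤ breg h gh v u := hsc v u
  rw [norm_sub_rev] at hvu
  calc ‖u - v‖ ^ 2 ≤ breg h gh u v + breg h gh v u := by linarith
    _ = dotd (gh u - gh v) (u - v) := breg_add_breg_swap h gh u v
    _ = (hN.dotDual (gh u) - hN.dotDual (gh v)) (u - v) := by rw [← map_sub]; rfl

end IsNorm

/-- Lemma: Bregman proximal step descent. -/
theorem bregman_prox_descent (d : ℕ) (X : Set (Fin d → ℝ))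
    (f : (Fin d → ℝ) → ℝ) (gradf ghat : (Fin d → ℝ) → Fin d → ℝ)
    (N : (Fin d → ℝ) → ℝ) (h : (Fin d → ℝ) → ℝ) (gh : (Fin d → ℝ) → Fin d → ℝ)
    (beta eta Lh epsgrad epsopt : ℝ) (x xp : Fin d → ℝ)
    (hX : Convex ℝ X) (hNorm : IsNorm N) (hx : x ∈ X)
    (hsmooth : ∀ y ∈ X,
      |f y - f x - dotd (gradf x) (y - x)| ≤ beta / 2 * (N (y - x)) ^ 2)
    (hbeta : 0 < beta) (heta0 : 0 < eta) (hetabeta : eta ≤ 1 / (2 * beta))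
    (hsc : ∀ u v, breg h gh u v ≥ (1 / 2) * (N (u - v)) ^ 2)
    (hLip : ∀ u v, dualNorm N (gh u - gh v) ≤ Lh * N (u - v))
    (hg : dualNorm N (ghat x - gradf x) ≤ epsgrad)
    (hxp : xp ∈ proxSet X (ghat x) gh eta epsopt x) :
    f xp ≤ f x - eta / (2 * Lh ^ 2) * (dualNorm N (Gmap gh eta x xp)) ^ 2
      + eta * epsgrad * dualNorm N (Gmap gh eta x xp) + epsopt := by
  obtain ⟨hxpX, hprox⟩ := hxp
  have hsmooth_xp : f xp ≤ f x + dotd (gradf x) (xp - x) + beta / 2 * N (xp - x) ^ 2 := by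
    linarith [(abs_le.1 (hsmooth xp hxpX)).2]
  have heta_beta : eta * beta ≤ 1 := by
    rw [le_div_iff₀ (by positivity)] at hetabeta
    nlinarith
  have hdescent := bregman_prox_descent_general (E := hNorm.Space)
    (f' := hNorm.dotDual (gradf x)) (g := hNorm.dotDual (ghat x))
    (h' := fun u => hNorm.dotDual (gh u)) (L := Lh) (εgrad := epsgrad) (εopt := epsopt)
    hsmooth_xp heta0 heta_beta (hNorm.sq_norm_sub_le_of_sq_le_breg hsc x xp)
    (by rw [← map_sub, hNorm.norm_dotDual]; exact hLip x xp)
    (by rwa [← map_sub, hNorm.norm_dotDual])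
    (by rw [← map_sub, ← map_smul, ← map_add, ← one_div]; exact hprox x hx)
  simpa only [← map_sub, ← map_smul, hNorm.norm_dotDual, Gmap, one_div] using hdescent
end
end

section
/- Transfer of regularity to the state-averaged regularizer: assume h : ℝ^A → ℝ is 1-strongly convex and has an L-Lipschitz gradient w.r.t. a norm ‖·‖∘ on ℝ^A. Let μ ∈ Δ(S) and define R_μ : ℝ^{S×A} → ℝ by R_μ(π) := E_{s∼μ}[h(π_s)]. Then: (1) B_{R_μ}(π, π̃) = E_{s∼μ} B_h(π_s, π̃_s) for all π, π̃; (2) R_μ is 1-strongly convex and has an L-Lipschitz gradient w.r.t. the weighted norm ‖·‖_{L²(μ),∘}. -/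
open scoped BigOperators

noncomputable section

variable {S A : Type} [Fintype S] [Fintype A]

/-- Dual norm of a norm `NN` on `ℝ^{S×A}`. -/
def dualNormSA (NN : (S → A → ℝ) → ℝ) (z : S → A → ℝ) : ℝ :=
  sSup ((fun u => innerSA z u) '' {u | NN u ≤ 1})

/-- Weighted norm `‖u‖_{L²(μ),∘} = √(Σ_s μ(s) ‖u_s‖∘²)`. -/
def wnormL2 (μ : S → ℝ) (N : (A → ℝ) → ℝ) (u : S → A → ℝ) : ℝ :=
  Real.sqrt (∑ s, μ s * (N (u s)) ^ 2)

/-- Bregman divergence on `ℝ^{S×A}` of `R` whose gradient is `gR`. -/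
def bregSA (R : (S → A → ℝ) → ℝ) (gR : (S → A → ℝ) → S → A → ℝ)
    (u v : S → A → ℝ) : ℝ :=
  R u - R v - innerSA (gR v) (u - v)

/-- State-averaged regularizer `R_μ(π) = E_{s∼μ}[h(π_s)]`. -/
def Rmu (μ : S → ℝ) (h : (A → ℝ) → ℝ) (π : S → A → ℝ) : ℝ :=
  ∑ s, μ s * h (π s)

/-- Gradient of the state-averaged regularizer: `(∇R_μ(π))_s = μ(s) ∇h(π_s)`. -/
def gradRmu (μ : S → ℝ) (gh : (A → ℝ) → A → ℝ) (π : S → A → ℝ) : S → A → ℝ :=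
  fun s a => μ s * gh (π s) a

/-!
The gradient difference of `R_μ` is `s ↦ μ s • z s` with `z s = ∇h(π_s) - ∇h(π̃_s)`. Applying
`⟨z s, u s⟩ ≤ ‖z s‖_* ‖u s‖` in each state and then Cauchy–Schwarz in `L²(μ)` bounds the dual of
`‖·‖_{L²(μ),∘}` at this vector by the `L²(μ)` norm of `s ↦ ‖z s‖_*`, to which the Lipschitz bound
on `∇h` applies state by state.
-/

section WeightedSums

variable {ι : Type*} {s : Finset ι} {w f g : ι → ℝ}

theorem sum_mul_mul_le_sqrt_mul_sqrt (hw : ∀ i ∈ s, 0 ≤ w i) :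
    ∑ i ∈ s, w i * (f i * g i) ≤ √(∑ i ∈ s, w i * f i ^ 2) * √(∑ i ∈ s, w i * g i ^ 2) := by
  have sq_eq (k : ι → ℝ) : ∑ i ∈ s, (√(w i) * k i) ^ 2 = ∑ i ∈ s, w i * k i ^ 2 :=
    Finset.sum_congr rfl fun i hi => by rw [mul_pow, Real.sq_sqrt (hw i hi)]
  calc ∑ i ∈ s, w i * (f i * g i)
      = ∑ i ∈ s, √(w i) * f i * (√(w i) * g i) :=
        Finset.sum_congr rfl fun i hi => by
          rw [mul_mul_mul_comm, Real.mul_self_sqrt (hw i hi)]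
    _ ≤ √(∑ i ∈ s, (√(w i) * f i) ^ 2) * √(∑ i ∈ s, (√(w i) * g i) ^ 2) :=
        Real.sum_mul_le_sqrt_mul_sqrt s _ _
    _ = √(∑ i ∈ s, w i * f i ^ 2) * √(∑ i ∈ s, w i * g i ^ 2) := by rw [sq_eq, sq_eq]

theorem sqrt_sum_mul_sq_le_mul_sqrt {L : ℝ} (hw : ∀ i ∈ s, 0 ≤ w i) (hf : ∀ i ∈ s, 0 ≤ f i)
    (hg : ∀ i ∈ s, 0 ≤ g i) (hfg : ∀ i ∈ s, f i ≤ L * g i) :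
    √(∑ i ∈ s, w i * f i ^ 2) ≤ L * √(∑ i ∈ s, w i * g i ^ 2) := by
  rcases le_or_gt 0 L with hL | hL
  · calc √(∑ i ∈ s, w i * f i ^ 2)
        ≤ √(∑ i ∈ s, w i * (L * g i) ^ 2) :=
          Real.sqrt_le_sqrt <| Finset.sum_le_sum fun i hi =>
            mul_le_mul_of_nonneg_left (pow_le_pow_left₀ (hf i hi) (hfg i hi) 2) (hw i hi)
      _ = √(L ^ 2 * ∑ i ∈ s, w i * g i ^ 2) := by
          simp only [mul_pow, mul_left_comm, Finset.mul_sum]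
      _ = L * √(∑ i ∈ s, w i * g i ^ 2) := by
          rw [Real.sqrt_mul (sq_nonneg L), Real.sqrt_sq hL]
  · have hg_zero : ∀ i ∈ s, g i = 0 := fun i hi =>
      le_antisymm (nonpos_of_mul_nonneg_right ((hf i hi).trans (hfg i hi)) hL) (hg i hi)
    have hf_zero : ∀ i ∈ s, f i = 0 := fun i hi =>
      le_antisymm (by simpa [hg_zero i hi] using hfg i hi) (hf i hi)
    have sum_zero {k : ι → ℝ} (hk : ∀ i ∈ s, k i = 0) : ∑ i ∈ s, w i * k i ^ 2 = 0 :=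
      Finset.sum_eq_zero fun i hi => by simp [hk i hi]
    simp [sum_zero hf_zero, sum_zero hg_zero]

end WeightedSums

theorem bddAbove_image_setOf_seminorm_le_one {E : Type*} [AddCommGroup E] [Module ℝ E]
    [FiniteDimensional ℝ E] (p : Seminorm ℝ E) (hp : ∀ x, p x = 0 → x = 0) (f : E →ₗ[ℝ] ℝ) :
    BddAbove (f '' {x | p x ≤ 1}) := by
  let : Norm E := ⟨p⟩
  have core : NormedSpace.Core ℝ E :=
    { norm_nonneg := apply_nonneg p
      norm_smul := map_smul_eq_mul p
      norm_triangle := map_add_le_add p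
      norm_eq_zero_iff := fun x => ⟨hp x, fun hx => hx ▸ map_zero p⟩ }
  let : NormedAddCommGroup E := NormedAddCommGroup.ofCore core
  let : NormedSpace ℝ E := NormedSpace.ofCore core
  refine ⟨‖f.toContinuousLinearMap‖, ?_⟩
  rintro _ ⟨x, hx, rfl⟩
  exact (Real.le_norm_self _).trans (f.toContinuousLinearMap.unit_le_opNorm x hx)

theorem innerA_smul_left (c : ℝ) (u v : A → ℝ) : innerA (c • u) v = c * innerA u v :=
  smul_dotProduct c u v

theorem innerA_smul_right (c : ℝ) (u v : A → ℝ) : innerA u (c • v) = c * innerA u v :=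
  dotProduct_smul c u v

namespace IsNormA

variable {N : (A → ℝ) → ℝ}

theorem bddAbove_image_innerA (hN : IsNormA N) (z : A → ℝ) :
    BddAbove (innerA z '' {u | N u ≤ 1}) :=
  bddAbove_image_setOf_seminorm_le_one (Seminorm.of N hN.2.2.2 hN.2.2.1)
    (fun u => (hN.2.1 u).1) (dotProductBilin ℝ ℝ z)

theorem innerA_le_dualNormA (hN : IsNormA N) (z : A → ℝ) {u : A → ℝ} (hu : N u ≤ 1) :
    innerA z u ≤ dualNormA N z :=
  le_csSup (hN.bddAbove_image_innerA z) ⟨u, hu, rfl⟩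

theorem dualNormA_nonneg (hN : IsNormA N) (z : A → ℝ) : 0 ≤ dualNormA N z := by
  have hN_zero : N 0 ≤ 1 := ((hN.2.1 0).2 rfl).trans_le zero_le_one
  simpa [innerA] using hN.innerA_le_dualNormA z hN_zero

theorem innerA_le_dualNormA_mul (hN : IsNormA N) (z u : A → ℝ) :
    innerA z u ≤ dualNormA N z * N u := by
  rcases (hN.1 u).eq_or_lt with hu | hu
  · obtain rfl : u = 0 := (hN.2.1 u).1 hu.symm
    simp [innerA, ← hu]
  · have norm_normalized : N ((N u)⁻¹ • u) = 1 := by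
      rw [hN.2.2.1, abs_of_pos (inv_pos.2 hu), inv_mul_cancel₀ hu.ne']
    have h_normalized := hN.innerA_le_dualNormA z norm_normalized.le
    rwa [innerA_smul_right, inv_mul_le_iff₀ hu, mul_comm] at h_normalized

end IsNormA

section StateAverage

variable {μ : S → ℝ} {N : (A → ℝ) → ℝ}

theorem innerSA_smul_le_wnormL2_mul (hμ : ∀ s, 0 ≤ μ s) (hN : IsNormA N) (z u : S → A → ℝ) :
    innerSA (fun s => μ s • z s) u ≤ wnormL2 μ (dualNormA N) z * wnormL2 μ N u :=
  calc innerSA (fun s => μ s • z s) u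
      = ∑ s, μ s * innerA (z s) (u s) :=
        Finset.sum_congr rfl fun s _ => innerA_smul_left (μ s) (z s) (u s)
    _ ≤ ∑ s, μ s * (dualNormA N (z s) * N (u s)) :=
        Finset.sum_le_sum fun s _ =>
          mul_le_mul_of_nonneg_left (hN.innerA_le_dualNormA_mul (z s) (u s)) (hμ s)
    _ ≤ wnormL2 μ (dualNormA N) z * wnormL2 μ N u :=
        sum_mul_mul_le_sqrt_mul_sqrt fun s _ => hμ s

theorem dualNormSA_wnormL2_smul_le (hμ : ∀ s, 0 ≤ μ s) (hN : IsNormA N) (z : S → A → ℝ) :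
    dualNormSA (wnormL2 μ N) (fun s => μ s • z s) ≤ wnormL2 μ (dualNormA N) z := by
  have hz : 0 ≤ wnormL2 μ (dualNormA N) z := Real.sqrt_nonneg _
  refine Real.sSup_le ?_ hz
  rintro _ ⟨u, hu, rfl⟩
  exact (innerSA_smul_le_wnormL2_mul hμ hN z u).trans (mul_le_of_le_one_right hz hu)

omit [Fintype S] [Fintype A] in
theorem gradRmu_sub_gradRmu (μ : S → ℝ) (gh : (A → ℝ) → A → ℝ) (π πt : S → A → ℝ) :
    gradRmu μ gh π - gradRmu μ gh πt = fun s => μ s • (gh (π s) - gh (πt s)) := by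
  ext s a
  simp only [gradRmu, Pi.sub_apply, Pi.smul_apply, smul_eq_mul, mul_sub]

theorem dualNormSA_gradRmu_sub_le (hμ : ∀ s, 0 ≤ μ s) (hN : IsNormA N)
    {gh : (A → ℝ) → A → ℝ} {L : ℝ}
    (hLip : ∀ u v, dualNormA N (gh u - gh v) ≤ L * N (u - v)) (π πt : S → A → ℝ) :
    dualNormSA (wnormL2 μ N) (gradRmu μ gh π - gradRmu μ gh πt) ≤ L * wnormL2 μ N (π - πt) := by
  rw [gradRmu_sub_gradRmu]
  calc dualNormSA (wnormL2 μ N) (fun s => μ s • (gh (π s) - gh (πt s)))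
      ≤ wnormL2 μ (dualNormA N) (fun s => gh (π s) - gh (πt s)) :=
        dualNormSA_wnormL2_smul_le hμ hN _
    _ ≤ L * wnormL2 μ N (π - πt) :=
        sqrt_sum_mul_sq_le_mul_sqrt (fun s _ => hμ s) (fun _ _ => hN.dualNormA_nonneg _)
          (fun _ _ => hN.1 _) fun s _ => hLip (π s) (πt s)

theorem bregSA_Rmu (μ : S → ℝ) (h : (A → ℝ) → ℝ) (gh : (A → ℝ) → A → ℝ) (π πt : S → A → ℝ) :
    bregSA (Rmu μ h) (gradRmu μ gh) π πt = ∑ s, μ s * bregA h gh (π s) (πt s) := by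
  simp only [bregSA, bregA, Rmu, gradRmu, innerSA, innerA, mul_sub, Finset.sum_sub_distrib,
    Finset.mul_sum, Pi.sub_apply, mul_assoc]

omit [Fintype A] in
theorem sq_wnormL2 (hμ : ∀ s, 0 ≤ μ s) (N : (A → ℝ) → ℝ) (u : S → A → ℝ) :
    wnormL2 μ N u ^ 2 = ∑ s, μ s * N (u s) ^ 2 :=
  Real.sq_sqrt <| Finset.sum_nonneg fun s _ => mul_nonneg (hμ s) (sq_nonneg _)

theorem mul_sq_wnormL2_le_bregSA_Rmu (hμ : ∀ s, 0 ≤ μ s) {h : (A → ℝ) → ℝ}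
    {gh : (A → ℝ) → A → ℝ} {c : ℝ} (hsc : ∀ u v, c * N (u - v) ^ 2 ≤ bregA h gh u v)
    (π πt : S → A → ℝ) :
    c * wnormL2 μ N (π - πt) ^ 2 ≤ bregSA (Rmu μ h) (gradRmu μ gh) π πt :=
  calc c * wnormL2 μ N (π - πt) ^ 2
      = ∑ s, μ s * (c * N (π s - πt s) ^ 2) := by
        simp only [sq_wnormL2 hμ, Finset.mul_sum, mul_left_comm c, Pi.sub_apply]
    _ ≤ ∑ s, μ s * bregA h gh (π s) (πt s) :=
        Finset.sum_le_sum fun s _ => mul_le_mul_of_nonneg_left (hsc (π s) (πt s)) (hμ s)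
    _ = bregSA (Rmu μ h) (gradRmu μ gh) π πt := (bregSA_Rmu μ h gh π πt).symm

end StateAverage

theorem state_averaged_regularizer_transfer_general
    (μ : S → ℝ) (hμ : ∀ s, 0 ≤ μ s)
    (N : (A → ℝ) → ℝ) (hN : IsNormA N)
    (h : (A → ℝ) → ℝ) (gh : (A → ℝ) → A → ℝ) (L : ℝ)
    (hsc : ∀ u v, bregA h gh u v ≥ (1 / 2) * (N (u - v)) ^ 2)
    (hLip : ∀ u v, dualNormA N (gh u - gh v) ≤ L * N (u - v)) :
    (∀ π πt : S → A → ℝ,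
      bregSA (Rmu μ h) (gradRmu μ gh) π πt = ∑ s, μ s * bregA h gh (π s) (πt s)) ∧
    (∀ π πt : S → A → ℝ,
      bregSA (Rmu μ h) (gradRmu μ gh) π πt ≥ (1 / 2) * (wnormL2 μ N (π - πt)) ^ 2) ∧
    (∀ π πt : S → A → ℝ,
      dualNormSA (wnormL2 μ N) (gradRmu μ gh π - gradRmu μ gh πt) ≤
        L * wnormL2 μ N (π - πt)) :=
  ⟨bregSA_Rmu μ h gh, mul_sq_wnormL2_le_bregSA_Rmu hμ hsc, dualNormSA_gradRmu_sub_le hμ hN hLip⟩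

/-- Lemma: transfer of regularity to the state-averaged
regularizer. -/
theorem state_averaged_regularizer_transfer
    (μ : S → ℝ) (hμ : (∀ s, 0 ≤ μ s) ∧ ∑ s, μ s = 1)
    (N : (A → ℝ) → ℝ) (hN : IsNormA N)
    (h : (A → ℝ) → ℝ) (gh : (A → ℝ) → A → ℝ) (L : ℝ)
    (hsc : ∀ u v, bregA h gh u v ≥ (1 / 2) * (N (u - v)) ^ 2)
    (hLip : ∀ u v, dualNormA N (gh u - gh v) ≤ L * N (u - v)) :
    -- (1) the Bregman divergence of R_μ is the state-average of that of h
    (∀ π πt : S → A → ℝ,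
      bregSA (Rmu μ h) (gradRmu μ gh) π πt = ∑ s, μ s * bregA h gh (π s) (πt s)) ∧
    -- (2) R_μ is 1-strongly convex and has L-Lipschitz gradient
    -- w.r.t. ‖·‖_{L²(μ),∘}
    (∀ π πt : S → A → ℝ,
      bregSA (Rmu μ h) (gradRmu μ gh) π πt ≥ (1 / 2) * (wnormL2 μ N (π - πt)) ^ 2) ∧
    (∀ π πt : S → A → ℝ,
      dualNormSA (wnormL2 μ N) (gradRmu μ gh π - gradRmu μ gh πt) ≤
        L * wnormL2 μ N (π - πt)) := by
  exact state_averaged_regularizer_transfer_general μ hμ.1 N hN h gh L hsc hLip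
end
end
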